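/- Fix α ∈ ℝ \ {0} and A > 0. Define, for x ∈ ℝ³ off the x₃-axis (polar angle θ ∈ (0,π)), the (−1)-homogeneous vector field u = (1/r)( U_θ(θ) e_θ + U_r(θ) e_r ) and (−2)-homogeneous pressure p = (U_r(θ) − U_θ(θ)²/2)/r², where U_θ(θ) = (2/sinθ)( −cosθ + α (A cot^{2α}(θ/2) − 1)/(A cot^{2α}(θ/2) + 1) ) and U_r(θ) = −2 + (8α²/sin²θ) · A cot^{2α}(θ/2)/(1 + A cot^{2α}(θ/2))². Then (u,p) is a (−1)-homogeneous axisymmetric no-swirl solution of the stationary Navier–Stokes equations on ℝ³ minus the x₃-axis. -/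

import Mathlib

noncomputable section

open Real Filter MeasureTheory Metric Topology
open scoped ENNReal InnerProductSpace

abbrev V3 := EuclideanSpace ℝ (Fin 3)
abbrev V2 := EuclideanSpace ℝ (Fin 2)

/-- standard basis vector in `ℝ³` -/
def e3 (j : Fin 3) : V3 := EuclideanSpace.single j 1

/-- partial derivative `∂_j f` -/
def pd (j : Fin 3) (f : V3 → ℝ) (x : V3) : ℝ := fderiv ℝ f x (e3 j)

/-- Laplacian on `ℝ³` -/
def lap3 (f : V3 → ℝ) (x : V3) : ℝ := ∑ j, pd j (fun y => pd j f y) x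

/-- stationary Navier–Stokes equations `-Δu + (u·∇)u + ∇p = 0`, `div u = 0` at `x` -/
def NSEq (u : V3 → V3) (p : V3 → ℝ) (x : V3) : Prop :=
  (∀ i, - lap3 (fun z => u z i) x + (∑ j, u x j * pd j (fun z => u z i) x) + pd i p x = 0)
  ∧ (∑ j, pd j (fun z => u z j) x) = 0

/-- stationary Euler equations `(u·∇)u + ∇p = 0`, `div u = 0` at `x` -/
def EulerEq (u : V3 → V3) (p : V3 → ℝ) (x : V3) : Prop :=
  (∀ i, (∑ j, u x j * pd j (fun z => u z i) x) + pd i p x = 0)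
  ∧ (∑ j, pd j (fun z => u z j) x) = 0

/-- south pole -/
def S3 : V3 := EuclideanSpace.single 2 (-1)
/-- north pole -/
def N3 : V3 := EuclideanSpace.single 2 1

/-- the unit sphere `S²` -/
def sphere2 : Set V3 := Metric.sphere (0 : V3) 1

/-- the open cone over a subset of the unit sphere -/
def cone3 (Ω : Set V3) : Set V3 := {x : V3 | x ≠ 0 ∧ (‖x‖⁻¹ • x) ∈ Ω}

/-- `|x'| = √(x₁² + x₂²)` -/
def rho (x : V3) : ℝ := Real.sqrt ((x 0) ^ 2 + (x 1) ^ 2)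

/-- the `x₃`-axis `{x' = 0}` -/
def axis3 : Set V3 := {x : V3 | x 0 = 0 ∧ x 1 = 0}

/-- `Ω_{a,b,R} = {a < x₃ < b, |x'| < R}` -/
def OmegaR (a b R : ℝ) : Set V3 := {x : V3 | a < x 2 ∧ x 2 < b ∧ rho x < R}

/-- build a point of `ℝ³` from `x' ∈ ℝ²` and `x₃ ∈ ℝ` -/
def emb (y : V2) (t : ℝ) : V3 := (EuclideanSpace.equiv (Fin 3) ℝ).symm ![y 0, y 1, t]

/-- spherical component `u_r = u · e_r` -/
def uRc (u : V3 → V3) (x : V3) : ℝ := (u x 0 * x 0 + u x 1 * x 1 + u x 2 * x 2) / ‖x‖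

/-- spherical component `u_θ = u · e_θ` -/
def uTc (u : V3 → V3) (x : V3) : ℝ :=
  (u x 0 * x 0 * x 2 + u x 1 * x 1 * x 2) / (‖x‖ * rho x) - u x 2 * rho x / ‖x‖

/-- spherical component `u_φ = u · e_φ` -/
def uPc (u : V3 → V3) (x : V3) : ℝ := (-(u x 0) * x 1 + u x 1 * x 0) / rho x

/-- axisymmetry on a set: the spherical components are independent of the meridian angle -/
def AxisymOn (u : V3 → V3) (Ω : Set V3) : Prop :=
  ∀ x ∈ Ω, ∀ y ∈ Ω, ‖x‖ = ‖y‖ → x 2 = y 2 →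
    uRc u x = uRc u y ∧ uTc u x = uTc u y ∧ uPc u x = uPc u y

/-- spherical frame vector `e_r` -/
def eRv (x : V3) : V3 := ‖x‖⁻¹ • x

/-- spherical frame vector `e_θ` -/
def eThv (x : V3) : V3 := (EuclideanSpace.equiv (Fin 3) ℝ).symm
  ![x 2 * x 0 / (‖x‖ * rho x), x 2 * x 1 / (‖x‖ * rho x), -(rho x) / ‖x‖]

/-- spherical frame vector `e_φ` -/
def ePhv (x : V3) : V3 := (EuclideanSpace.equiv (Fin 3) ℝ).symm ![-(x 1) / rho x, x 0 / rho x, 0]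

/-- the spherical cap `S² ∩ B_δ(S) \ {S}` -/
def NSCap (δ : ℝ) : Set V3 := (sphere2 ∩ Metric.ball S3 δ) \ {S3}

/-- the spherical cap `S² ∩ B_δ(S)` -/
def NSCapFull (δ : ℝ) : Set V3 := sphere2 ∩ Metric.ball S3 δ

/-- `cot(θ/2)^(2α)` in Cartesian variables. -/
def cot2a (α : ℝ) (x : V3) : ℝ := ((‖x‖ + x 2) / rho x) ^ (2 * α)

/-- `u_θ` component (times nothing) of the solution of Example 3.2 (a). -/
def Utheta17 (α A : ℝ) (x : V3) : ℝ :=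
  (2 * ‖x‖ / rho x) * (-(x 2 / ‖x‖) + α * (A * cot2a α x - 1) / (A * cot2a α x + 1))

/-- `u_r` component of the solution of Example 3.2 (a). -/
def Ur17 (α A : ℝ) (x : V3) : ℝ :=
  -2 + (8 * α ^ 2 * ‖x‖ ^ 2 / (rho x) ^ 2) * (A * cot2a α x) / (1 + A * cot2a α x) ^ 2

/-- the explicit velocity field of Example 3.2 (a). -/
def u17 (α A : ℝ) (x : V3) : V3 :=
  ‖x‖⁻¹ • (Utheta17 α A x • eThv x + Ur17 α A x • eRv x)

/-- the explicit pressure of Example 3.2 (a). -/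
def p17 (α A : ℝ) (x : V3) : ℝ := (Ur17 α A x - (Utheta17 α A x) ^ 2 / 2) / ‖x‖ ^ 2

/-!
An axisymmetric no-swirl field that is homogeneous of degree `-1` has the form
`u = r⁻¹ (F(t) e_r + G(t) e₃)` with `t = cos θ`. In this non-orthogonal frame the differential
operators act on the profiles `F`, `G` without singular coefficients. Incompressibility determines
`F` from `G`, the `e₃` part of the momentum balance determines the pressure from `G`, and what
remains is the vanishing, up to the constant of integration of the pressure, of the second
derivative of a Riccati expression in `G`. The profile `G = 2 (t - α T) / (1 - t²)`, where
`(1 - t²) T' = α (1 - T²)`, makes this expression constant; the choice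
`T = (A q - 1) / (A q + 1)` with `q = cot ^ (2 α) (θ / 2) = ((1 + t) / (1 - t)) ^ α` gives the
explicit solution.
-/

section PartialDerivatives

variable {f g : V3 → ℝ} {x : V3}

lemma e3_apply (i j : Fin 3) : e3 i j = if j = i then 1 else 0 :=
  PiLp.single_apply 2 ℝ i 1 j

lemma pd_congr (j : Fin 3) (h : f =ᶠ[𝓝 x] g) : pd j f x = pd j g x := by
  rw [pd, pd, h.fderiv_eq]

lemma pd_const (j : Fin 3) (a : ℝ) (x : V3) : pd j (fun _ => a) x = 0 := by
  simp [pd]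

lemma pd_coord (i j : Fin 3) (x : V3) : pd j (fun y => y i) x = e3 j i := by
  have h : HasFDerivAt (fun y : V3 => y i) (EuclideanSpace.proj i : V3 →L[ℝ] ℝ) x :=
    (EuclideanSpace.proj i : V3 →L[ℝ] ℝ).hasFDerivAt
  rw [pd, h.fderiv]
  rfl

lemma pd_add (j : Fin 3) (hf : DifferentiableAt ℝ f x) (hg : DifferentiableAt ℝ g x) :
    pd j (fun y => f y + g y) x = pd j f x + pd j g x := by
  rw [pd, fderiv_fun_add hf hg]
  rfl

lemma pd_mul (j : Fin 3) (hf : DifferentiableAt ℝ f x) (hg : DifferentiableAt ℝ g x) :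
    pd j (fun y => f y * g y) x = f x * pd j g x + g x * pd j f x := by
  rw [pd, fderiv_fun_mul hf hg]
  rfl

lemma pd_comp {φ : ℝ → ℝ} (j : Fin 3) (hφ : DifferentiableAt ℝ φ (f x))
    (hf : DifferentiableAt ℝ f x) : pd j (fun y => φ (f y)) x = deriv φ (f x) * pd j f x := by
  have h := hφ.hasDerivAt.comp_hasFDerivAt x hf.hasFDerivAt
  rw [pd, show (fun y => φ (f y)) = φ ∘ f from rfl, h.fderiv]
  rfl

lemma contDiffAt_pd {m n : WithTop ℕ∞} (hf : ContDiffAt ℝ n f x) (hmn : m + 1 ≤ n) (j : Fin 3) :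
    ContDiffAt ℝ m (pd j f) x :=
  (hf.fderiv_right hmn).clm_apply contDiffAt_const

lemma differentiableAt_pd (hf : ContDiffAt ℝ 2 f x) (j : Fin 3) :
    DifferentiableAt ℝ (pd j f) x :=
  (contDiffAt_pd (m := 1) hf (by norm_num) j).differentiableAt one_ne_zero

lemma eventually_differentiableAt (hf : ContDiffAt ℝ 2 f x) :
    ∀ᶠ y in 𝓝 x, DifferentiableAt ℝ f y :=
  (hf.eventually (by simp)).mono fun _ hy => hy.differentiableAt two_ne_zero

lemma lap3_congr (h : f =ᶠ[𝓝 x] g) : lap3 f x = lap3 g x :=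
  Finset.sum_congr rfl fun j _ => pd_congr j <| h.eventuallyEq_nhds.mono fun _ => pd_congr j

lemma lap3_const (a : ℝ) (x : V3) : lap3 (fun _ => a) x = 0 := by
  simp only [lap3, pd_const, Finset.sum_const_zero]

lemma lap3_coord (i : Fin 3) (x : V3) : lap3 (fun y => y i) x = 0 := by
  simp only [lap3, pd_coord, pd_const, Finset.sum_const_zero]

lemma lap3_add (hf : ContDiffAt ℝ 2 f x) (hg : ContDiffAt ℝ 2 g x) :
    lap3 (fun y => f y + g y) x = lap3 f x + lap3 g x := by
  rw [lap3, lap3, lap3, ← Finset.sum_add_distrib]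
  refine Finset.sum_congr rfl fun j _ => ?_
  rw [← pd_add j (differentiableAt_pd hf j) (differentiableAt_pd hg j)]
  refine pd_congr j ?_
  filter_upwards [eventually_differentiableAt hf, eventually_differentiableAt hg] with y hfy hgy
  exact pd_add j hfy hgy

lemma lap3_mul (hf : ContDiffAt ℝ 2 f x) (hg : ContDiffAt ℝ 2 g x) :
    lap3 (fun y => f y * g y) x
      = f x * lap3 g x + g x * lap3 f x + 2 * ∑ j, pd j f x * pd j g x := by
  simp only [lap3, Finset.mul_sum, ← Finset.sum_add_distrib]
  refine Finset.sum_congr rfl fun j _ => ?_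
  have hf' := hf.differentiableAt two_ne_zero
  have hg' := hg.differentiableAt two_ne_zero
  have hpd : pd j (fun y => f y * g y) =ᶠ[𝓝 x] fun y => f y * pd j g y + g y * pd j f y := by
    filter_upwards [eventually_differentiableAt hf, eventually_differentiableAt hg] with y hfy hgy
    exact pd_mul j hfy hgy
  rw [pd_congr j hpd, pd_add j (hf'.fun_mul (differentiableAt_pd hg j))
    (hg'.fun_mul (differentiableAt_pd hf j)), pd_mul j hf' (differentiableAt_pd hg j),
    pd_mul j hg' (differentiableAt_pd hf j)]
  ring

end PartialDerivatives

section ConicalFunctions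

/-- The cosine of the polar angle `θ` of `x`. -/
def cosPolar (x : V3) : ℝ := x 2 / ‖x‖

/-- The axisymmetric scalar function `r ^ m * f (cos θ)`, homogeneous of degree `m`, with
profile `f`. -/
def conical (m : ℤ) (f : ℝ → ℝ) (x : V3) : ℝ := ‖x‖ ^ m * f (cosPolar x)

/-- The axisymmetric no-swirl vector field `r ^ m * (F (cos θ) e_r + G (cos θ) e₃)`, homogeneous of
degree `m`. Decomposing along `e₃` instead of `e_θ` keeps the distance to the axis out of all
formulas. -/
def axialField (m : ℤ) (F G : ℝ → ℝ) (x : V3) : V3 :=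
  conical (m - 1) F x • x + conical m G x • e3 2

variable {f F G : ℝ → ℝ} {x : V3}

lemma axialField_apply (m : ℤ) (F G : ℝ → ℝ) (x : V3) (i : Fin 3) :
    axialField m F G x i = conical (m - 1) F x * x i + conical m G x * e3 2 i := rfl

lemma norm_sq_eq_sum (x : V3) : ‖x‖ ^ 2 = x 0 ^ 2 + x 1 ^ 2 + x 2 ^ 2 := by
  simp only [EuclideanSpace.norm_sq_eq, Fin.sum_univ_three, norm_eq_abs, sq_abs]

lemma norm_mul_cosPolar (hx : x ≠ 0) : ‖x‖ * cosPolar x = x 2 :=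
  mul_div_cancel₀ _ (norm_ne_zero_iff.mpr hx)

lemma differentiableAt_norm (hx : x ≠ 0) : DifferentiableAt ℝ (fun y : V3 => ‖y‖) x :=
  (contDiffAt_norm ℝ hx).differentiableAt one_ne_zero

lemma pd_norm (j : Fin 3) (hx : x ≠ 0) : pd j (fun y => ‖y‖) x = x j / ‖x‖ := by
  have hsq : pd j (fun y => ‖y‖ * ‖y‖) x = 2 * x j := by
    simp only [← pow_two, pd, fderiv_norm_sq_apply]
    simp [e3, EuclideanSpace.inner_single_right]
  rw [pd_mul j (differentiableAt_norm hx) (differentiableAt_norm hx)] at hsq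
  rw [eq_div_iff (norm_ne_zero_iff.mpr hx)]
  linarith

lemma contDiffAt_cosPolar {n : WithTop ℕ∞} (hx : x ≠ 0) : ContDiffAt ℝ n cosPolar x :=
  ContDiffAt.div (EuclideanSpace.proj (2 : Fin 3) : V3 →L[ℝ] ℝ).contDiff.contDiffAt
    (contDiffAt_norm ℝ hx) (norm_ne_zero_iff.mpr hx)

lemma differentiableAt_cosPolar (hx : x ≠ 0) : DifferentiableAt ℝ cosPolar x :=
  (contDiffAt_cosPolar hx).differentiableAt one_ne_zero

lemma pd_cosPolar (j : Fin 3) (hx : x ≠ 0) :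
    pd j cosPolar x = (e3 2 j - cosPolar x * x j / ‖x‖) / ‖x‖ := by
  have hr : ‖x‖ ≠ 0 := norm_ne_zero_iff.mpr hx
  have hcoord : pd j (fun y => ‖y‖ * cosPolar y) x = e3 2 j := by
    rw [pd_congr j ((eventually_ne_nhds hx).mono fun y hy => norm_mul_cosPolar hy), pd_coord,
      e3_apply, e3_apply]
    simp only [eq_comm]
  rw [pd_mul j (differentiableAt_norm hx) (differentiableAt_cosPolar hx), pd_norm j hx]
    at hcoord
  rw [eq_div_iff hr, ← hcoord]
  ring

lemma contDiffAt_norm_zpow {n : WithTop ℕ∞} (m : ℤ) (hx : x ≠ 0) :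
    ContDiffAt ℝ n (fun y : V3 => ‖y‖ ^ m) x := by
  simpa only [Real.rpow_intCast] using
    (contDiffAt_norm ℝ hx).rpow_const_of_ne (p := m) (norm_ne_zero_iff.mpr hx)

lemma contDiffAt_conical {n : WithTop ℕ∞} (m : ℤ) (hx : x ≠ 0)
    (hf : ContDiffAt ℝ n f (cosPolar x)) : ContDiffAt ℝ n (conical m f) x :=
  (contDiffAt_norm_zpow m hx).mul (hf.comp x (contDiffAt_cosPolar hx))

lemma differentiableAt_conical (m : ℤ) (hx : x ≠ 0) (hf : DifferentiableAt ℝ f (cosPolar x)) :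
    DifferentiableAt ℝ (conical m f) x :=
  ((contDiffAt_norm_zpow m hx).differentiableAt one_ne_zero).mul
    (hf.comp x (differentiableAt_cosPolar hx))

lemma pd_conical (m : ℤ) (j : Fin 3) (hx : x ≠ 0) (hf : DifferentiableAt ℝ f (cosPolar x)) :
    pd j (conical m f) x
      = axialField (m - 1) (fun t => m * f t - t * deriv f t) (deriv f) x j := by
  have hr : ‖x‖ ≠ 0 := norm_ne_zero_iff.mpr hx
  have hzpow : pd j (fun y => ‖y‖ ^ m) x = m * ‖x‖ ^ (m - 1) * (x j / ‖x‖) := by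
    rw [pd_comp (φ := fun s => s ^ m) j (differentiableAt_zpow.mpr (.inl hr))
      (differentiableAt_norm hx), deriv_zpow, pd_norm j hx]
  have hprod := pd_mul j ((contDiffAt_norm_zpow m hx).differentiableAt one_ne_zero)
    (hf.comp x (differentiableAt_cosPolar hx))
  simp only [Function.comp_def] at hprod
  rw [show conical m f = fun y => ‖y‖ ^ m * f (cosPolar y) from rfl, hprod,
    pd_comp j hf (differentiableAt_cosPolar hx), hzpow, pd_cosPolar j hx, axialField_apply,
    conical, conical, zpow_sub_one₀ hr (m - 1), zpow_sub_one₀ hr m]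
  field_simp
  ring

lemma sum_axialField_mul_axialField (m n : ℤ) (F G P Q : ℝ → ℝ) (hx : x ≠ 0) :
    ∑ j, axialField m F G x j * axialField n P Q x j
      = conical (m + n) (fun t => F t * P t + t * (F t * Q t + G t * P t) + G t * Q t) x := by
  have hr : ‖x‖ ≠ 0 := norm_ne_zero_iff.mpr hx
  have hsq : x 0 ^ 2 + x 1 ^ 2 = ‖x‖ ^ 2 - (‖x‖ * cosPolar x) ^ 2 := by
    rw [norm_mul_cosPolar hx, norm_sq_eq_sum]
    ring
  simp only [axialField_apply, Fin.sum_univ_three, e3_apply, conical, zpow_sub_one₀ hr,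
    zpow_add₀ hr, ← norm_mul_cosPolar hx, Fin.reduceEq, if_true, if_false]
  field_simp
  linear_combination F (cosPolar x) * P (cosPolar x) * hsq

lemma sum_coord_mul_pd_conical (m : ℤ) (hx : x ≠ 0) (hf : DifferentiableAt ℝ f (cosPolar x)) :
    ∑ j, x j * pd j (conical m f) x = m * conical m f x := by
  have hcoord (j : Fin 3) : x j = axialField 1 (fun _ => 1) (fun _ => 0) x j := by
    simp [axialField_apply, conical]
  simp only [pd_conical m _ hx hf, hcoord, sum_axialField_mul_axialField _ _ _ _ _ _ hx, conical]
  ring_nf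

lemma pd_two_conical (m : ℤ) (hx : x ≠ 0) (hf : DifferentiableAt ℝ f (cosPolar x)) :
    pd 2 (conical m f) x
      = conical (m - 1) (fun t => (1 - t ^ 2) * deriv f t + m * t * f t) x := by
  have hr : ‖x‖ ≠ 0 := norm_ne_zero_iff.mpr hx
  simp only [pd_conical m 2 hx hf, axialField_apply, e3_apply, conical, if_true,
    zpow_sub_one₀ hr, ← norm_mul_cosPolar hx]
  field_simp
  ring

lemma pd_axialField (m : ℤ) (i j : Fin 3) (hx : x ≠ 0) (hF : DifferentiableAt ℝ F (cosPolar x))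
    (hG : DifferentiableAt ℝ G (cosPolar x)) :
    pd j (fun y => axialField m F G y i) x = conical (m - 1) F x * e3 j i
      + x i * pd j (conical (m - 1) F) x + e3 2 i * pd j (conical m G) x := by
  have hcoord : DifferentiableAt ℝ (fun y : V3 => y i) x := by fun_prop
  have hF' := differentiableAt_conical (m - 1) hx hF
  have hG' := differentiableAt_conical m hx hG
  simp only [axialField_apply]
  rw [pd_add j (hF'.fun_mul hcoord) (hG'.fun_mul (differentiableAt_const _)), pd_mul j hF' hcoord,
    pd_mul j hG' (differentiableAt_const _), pd_coord, pd_const]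
  ring

lemma div_axialField (m : ℤ) (hx : x ≠ 0) (hF : DifferentiableAt ℝ F (cosPolar x))
    (hG : DifferentiableAt ℝ G (cosPolar x)) :
    ∑ j, pd j (fun y => axialField m F G y j) x
      = conical (m - 1)
          (fun t => (m + 2) * F t + (1 - t ^ 2) * deriv G t + m * t * G t) x := by
  have hdim : ∑ j, conical (m - 1) F x * e3 j j = 3 * conical (m - 1) F x := by
    simp [e3_apply]
  have haxis : ∑ j, e3 2 j * pd j (conical m G) x = pd 2 (conical m G) x := by
    simp [e3_apply]
  simp only [pd_axialField m _ _ hx hF hG, Finset.sum_add_distrib]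
  rw [hdim, haxis, sum_coord_mul_pd_conical _ hx hF, pd_two_conical m hx hG]
  simp only [conical]
  push_cast
  ring

lemma lap3_conical (m : ℤ) (hx : x ≠ 0) (hf : ContDiffAt ℝ 2 f (cosPolar x)) :
    lap3 (conical m f) x = conical (m - 2)
      (fun t => (1 - t ^ 2) * deriv (deriv f) t - 2 * t * deriv f t + m * (m + 1) * f t) x := by
  have hf₁ : DifferentiableAt ℝ f (cosPolar x) := hf.differentiableAt two_ne_zero
  have hf₂ : DifferentiableAt ℝ (deriv f) (cosPolar x) :=
    (hf.derivWithin (m := 1) (by norm_num)).differentiableAt one_ne_zero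
  have hgrad : ∀ᶠ y in 𝓝 x, ∀ j, pd j (conical m f) y
      = axialField (m - 1) (fun t => m * f t - t * deriv f t) (deriv f) y j := by
    filter_upwards [eventually_ne_nhds hx,
      (differentiableAt_cosPolar hx).continuousAt.eventually (hf.eventually (by simp))]
      with y hy hfy j
    exact pd_conical m j hy (hfy.differentiableAt two_ne_zero)
  rw [lap3, Finset.sum_congr rfl fun j _ => pd_congr j (hgrad.mono fun y hy => hy j),
    div_axialField _ hx (by fun_prop) hf₂]
  simp only [conical, sub_sub]
  push_cast
  ring

lemma lap3_axialField (m : ℤ) (i : Fin 3) (hx : x ≠ 0) (hF : ContDiffAt ℝ 2 F (cosPolar x))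
    (hG : ContDiffAt ℝ 2 G (cosPolar x)) :
    lap3 (fun y => axialField m F G y i) x = axialField (m - 2)
      (fun t => (1 - t ^ 2) * deriv (deriv F) t - 4 * t * deriv F t + (m - 1) * (m + 2) * F t)
      (fun t => (1 - t ^ 2) * deriv (deriv G) t - 2 * t * deriv G t + m * (m + 1) * G t
        + 2 * deriv F t) x i := by
  have hcoord : ContDiffAt ℝ 2 (fun y : V3 => y i) x := by fun_prop
  have hF' := contDiffAt_conical (m - 1) hx hF
  have hG' := contDiffAt_conical m hx hG
  have hpartial : ∑ j, pd j (conical (m - 1) F) x * e3 j i = pd i (conical (m - 1) F) x := by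
    simp [e3_apply]
  simp only [axialField_apply]
  rw [lap3_add (hF'.mul hcoord) (hG'.mul contDiffAt_const), lap3_mul hF' hcoord,
    lap3_mul hG' contDiffAt_const, lap3_conical _ hx hF, lap3_conical _ hx hG, lap3_coord,
    lap3_const]
  simp only [pd_coord, pd_const, hpartial, mul_zero, Finset.sum_const_zero]
  rw [pd_conical _ _ hx (hF.differentiableAt two_ne_zero)]
  simp only [axialField_apply, conical, sub_sub]
  push_cast
  ring_nf

lemma sum_axialField_mul_pd_conical (m n : ℤ) (hx : x ≠ 0)
    (hf : DifferentiableAt ℝ f (cosPolar x)) :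
    ∑ j, axialField n F G x j * pd j (conical m f) x = conical (m + n - 1)
      (fun t => m * F t * f t + G t * ((1 - t ^ 2) * deriv f t + m * t * f t)) x := by
  simp only [pd_conical m _ hx hf, sum_axialField_mul_axialField _ _ _ _ _ _ hx, conical]
  rw [show n + (m - 1) = m + n - 1 by ring]
  ring

lemma convection_axialField (m n : ℤ) {P Q : ℝ → ℝ} (i : Fin 3) (hx : x ≠ 0)
    (hF : DifferentiableAt ℝ F (cosPolar x)) (hG : DifferentiableAt ℝ G (cosPolar x)) :
    ∑ j, axialField n P Q x j * pd j (fun y => axialField m F G y i) x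
      = axialField (m + n - 1)
          (fun t => m * P t * F t + Q t * ((1 - t ^ 2) * deriv F t + (m - 1) * t * F t))
          (fun t => Q t * F t + m * P t * G t + Q t * ((1 - t ^ 2) * deriv G t + m * t * G t))
          x i := by
  have hr : ‖x‖ ≠ 0 := norm_ne_zero_iff.mpr hx
  have hcoord : ∑ j, axialField n P Q x j * e3 j i = axialField n P Q x i := by
    simp [e3_apply]
  calc ∑ j, axialField n P Q x j * pd j (fun y => axialField m F G y i) x
      = conical (m - 1) F x * (∑ j, axialField n P Q x j * e3 j i)
        + x i * (∑ j, axialField n P Q x j * pd j (conical (m - 1) F) x)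
        + e3 2 i * ∑ j, axialField n P Q x j * pd j (conical m G) x := by
        simp only [pd_axialField m _ _ hx hF hG, Fin.sum_univ_three]
        ring
    _ = _ := by
        rw [hcoord, sum_axialField_mul_pd_conical _ _ hx hF,
          sum_axialField_mul_pd_conical _ _ hx hG]
        simp only [axialField_apply, conical, zpow_add₀ hr, zpow_sub_one₀ hr]
        push_cast
        ring

end ConicalFunctions

section Symmetries

variable {x : V3}

lemma cosPolar_smul {c : ℝ} (hc : 0 < c) (x : V3) : cosPolar (c • x) = cosPolar x := by
  rw [cosPolar, cosPolar, norm_smul, Real.norm_of_nonneg hc.le, PiLp.smul_apply, smul_eq_mul,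
    mul_div_mul_left _ _ hc.ne']

lemma conical_smul (m : ℤ) (f : ℝ → ℝ) {c : ℝ} (hc : 0 < c) (x : V3) :
    conical m f (c • x) = c ^ m * conical m f x := by
  rw [conical, conical, cosPolar_smul hc, norm_smul, Real.norm_of_nonneg hc.le, mul_zpow,
    mul_assoc]

lemma axialField_smul (m : ℤ) (F G : ℝ → ℝ) {c : ℝ} (hc : 0 < c) (x : V3) :
    axialField m F G (c • x) = c ^ m • axialField m F G x := by
  rw [axialField, conical_smul _ _ hc, conical_smul _ _ hc, zpow_sub_one₀ hc.ne', axialField,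
    smul_add, smul_smul, smul_smul, smul_smul]
  congr 2
  field_simp

lemma uPc_axialField (m : ℤ) (F G : ℝ → ℝ) (x : V3) : uPc (axialField m F G) x = 0 := by
  have hnum : -(axialField m F G x 0) * x 1 + axialField m F G x 1 * x 0 = 0 := by
    simp only [axialField_apply, e3_apply, Fin.reduceEq, if_false]
    ring
  rw [uPc, hnum, zero_div]

lemma rho_sq (x : V3) : rho x ^ 2 = x 0 ^ 2 + x 1 ^ 2 := Real.sq_sqrt (by positivity)

lemma norm_sq_eq_rho_sq_add (x : V3) : ‖x‖ ^ 2 = rho x ^ 2 + x 2 ^ 2 := by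
  rw [rho_sq, norm_sq_eq_sum]

lemma rho_eq_of_norm_eq {y : V3} (hnorm : ‖x‖ = ‖y‖) (hz : x 2 = y 2) : rho x = rho y := by
  have hsq : rho x ^ 2 = rho y ^ 2 := by
    linear_combination norm_sq_eq_rho_sq_add y - norm_sq_eq_rho_sq_add x
      + (‖x‖ + ‖y‖) * hnorm - (x 2 + y 2) * hz
  exact (sq_eq_sq₀ (Real.sqrt_nonneg _) (Real.sqrt_nonneg _)).mp hsq

lemma axisymOn_axialField (m : ℤ) (F G : ℝ → ℝ) (Ω : Set V3) : AxisymOn (axialField m F G) Ω := by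
  intro x _ y _ hnorm hz
  have hrho : rho x = rho y := rho_eq_of_norm_eq hnorm hz
  have hcon (n : ℤ) (f : ℝ → ℝ) : conical n f x = conical n f y := by
    rw [conical, conical, cosPolar, cosPolar, hnorm, hz]
  have hz' : axialField m F G x 2 = axialField m F G y 2 := by
    simp only [axialField_apply, hcon, hz]
  have hhor (w : V3) : axialField m F G w 0 * w 0 + axialField m F G w 1 * w 1
      = conical (m - 1) F w * rho w ^ 2 := by
    simp only [axialField_apply, e3_apply, rho_sq, Fin.reduceEq, if_false]
    ring
  refine ⟨?_, ?_, ?_⟩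
  · rw [uRc, uRc, hhor, hhor, hcon, hrho, hz', hz, hnorm]
  · rw [uTc, uTc, ← add_mul, ← add_mul, hhor, hhor, hcon, hrho, hz', hz, hnorm]
  · rw [uPc_axialField, uPc_axialField]

lemma AxisymOn.congr {u v : V3 → V3} {Ω : Set V3} (hu : AxisymOn u Ω) (huv : Set.EqOn v u Ω) :
    AxisymOn v Ω := by
  intro x hx y hy hnorm hz
  simpa only [uRc, uTc, uPc, huv hx, huv hy] using hu x hx y hy hnorm hz

end Symmetries

section ProfileEquations

variable {F G P : ℝ → ℝ} {x : V3} {t : ℝ}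

lemma NSEq.congr {u v : V3 → V3} {p q : V3 → ℝ} (h : NSEq u p x) (hu : v =ᶠ[𝓝 x] u)
    (hp : q =ᶠ[𝓝 x] p) : NSEq v q x := by
  have hcomp (i : Fin 3) : (fun z => v z i) =ᶠ[𝓝 x] fun z => u z i :=
    hu.fun_comp fun w => w i
  have hpd (i j : Fin 3) := pd_congr j (hcomp i)
  have hlap (i : Fin 3) := lap3_congr (hcomp i)
  simpa only [NSEq, hpd, hlap, hu.eq_of_nhds, pd_congr _ hp] using h

/-- The profile equations express incompressibility and the `e_r` and `e₃` parts of the momentum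
balance `Δu = (u·∇)u + ∇p`. -/
theorem nsEq_axialField (hx : x ≠ 0) (ht : cosPolar x = t) (hF : ContDiffAt ℝ 2 F t)
    (hG : ContDiffAt ℝ 2 G t) (hP : DifferentiableAt ℝ P t)
    (hdiv : F t + (1 - t ^ 2) * deriv G t - t * G t = 0)
    (hradial : (1 - t ^ 2) * deriv (deriv F) t - 4 * t * deriv F t - 2 * F t
      = G t * ((1 - t ^ 2) * deriv F t - 2 * t * F t) - F t ^ 2 - 2 * P t - t * deriv P t)
    (haxial : (1 - t ^ 2) * deriv (deriv G) t - 2 * t * deriv G t + 2 * deriv F t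
      = G t * ((1 - t ^ 2) * deriv G t - t * G t) + deriv P t) :
    NSEq (axialField (-1) F G) (conical (-2) P) x := by
  subst ht
  have hF₁ := hF.differentiableAt two_ne_zero
  have hG₁ := hG.differentiableAt two_ne_zero
  refine ⟨fun i => ?_, ?_⟩
  · rw [lap3_axialField _ i hx hF hG, convection_axialField _ _ i hx hF₁ hG₁, pd_conical _ i hx hP]
    simp only [axialField_apply, conical, Int.reduceSub, Int.reduceAdd, Int.reduceNeg]
    push_cast
    linear_combination (-(‖x‖ ^ (-4 : ℤ) * x i)) * hradial
      - ‖x‖ ^ (-3 : ℤ) * e3 2 i * haxial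
  · rw [div_axialField _ hx hF₁ hG₁]
    simp only [conical, Int.reduceSub, Int.reduceNeg]
    push_cast
    linear_combination ‖x‖ ^ (-2 : ℤ) * hdiv

/-- The profile `F` determined by `G` through incompressibility. -/
def solenoidalProfile (G : ℝ → ℝ) (t : ℝ) : ℝ := t * G t - (1 - t ^ 2) * deriv G t

/-- The pressure profile, obtained by integrating the `e₃` part of the momentum balance; `C` is the
constant of integration. -/
def pressureProfile (C : ℝ) (G : ℝ → ℝ) (t : ℝ) : ℝ :=
  solenoidalProfile G t + t * G t - (1 - t ^ 2) * G t ^ 2 / 2 + C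

/-- The Riccati expression of a no-swirl conical flow. With `V = -(1 - t ^ 2) G = U_θ sin θ` it is
the Slezkin–Landau expression `(1 - t ^ 2) V' + 2 t V + V ^ 2 / 2`, up to sign. -/
def riccatiProfile (G : ℝ → ℝ) (t : ℝ) : ℝ := (1 - t ^ 2) ^ 2 * (deriv G t - G t ^ 2 / 2)

lemma hasDerivAt_deriv (hG : ContDiffAt ℝ 2 G t) : HasDerivAt (deriv G) (deriv (deriv G) t) t :=
  ((hG.derivWithin (m := 1) (by norm_num)).differentiableAt one_ne_zero).hasDerivAt

lemma hasDerivAt_one_sub_sq (t : ℝ) : HasDerivAt (fun s : ℝ => 1 - s ^ 2) (-(2 * t)) t := by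
  simpa using (hasDerivAt_pow 2 t).const_sub 1

lemma hasDerivAt_solenoidalProfile (hG : ContDiffAt ℝ 2 G t) :
    HasDerivAt (solenoidalProfile G)
      (G t + 3 * t * deriv G t - (1 - t ^ 2) * deriv (deriv G) t) t := by
  have hG₀ := (hG.differentiableAt two_ne_zero).hasDerivAt
  refine (((hasDerivAt_id t).mul hG₀).sub
    ((hasDerivAt_one_sub_sq t).mul (hasDerivAt_deriv hG))).congr_deriv ?_
  simp only [id]
  ring

lemma hasDerivAt_pressureProfile (C : ℝ) (hG : ContDiffAt ℝ 2 G t) :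
    HasDerivAt (pressureProfile C G)
      (2 * G t + 4 * t * deriv G t - (1 - t ^ 2) * deriv (deriv G) t
        + t * G t ^ 2 - (1 - t ^ 2) * G t * deriv G t) t := by
  have hG₀ := (hG.differentiableAt two_ne_zero).hasDerivAt
  refine ((((hasDerivAt_solenoidalProfile hG).add ((hasDerivAt_id t).mul hG₀)).sub
    (((hasDerivAt_one_sub_sq t).mul (hG₀.pow 2)).div_const 2)).add_const C).congr_deriv ?_
  simp only [id, Pi.pow_apply]
  ring

lemma hasDerivAt_riccatiProfile (hG : ContDiffAt ℝ 2 G t) :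
    HasDerivAt (riccatiProfile G)
      ((1 - t ^ 2) ^ 2 * (deriv (deriv G) t - G t * deriv G t)
        - 4 * t * (1 - t ^ 2) * (deriv G t - G t ^ 2 / 2)) t := by
  have hG₀ := (hG.differentiableAt two_ne_zero).hasDerivAt
  refine (((hasDerivAt_one_sub_sq t).pow 2).mul
    ((hasDerivAt_deriv hG).sub ((hG₀.pow 2).div_const 2))).congr_deriv ?_
  simp only [Pi.pow_apply, Pi.sub_apply]
  push_cast
  ring

lemma deriv_deriv_solenoidalProfile (hG : ContDiffAt ℝ 3 G t) :
    deriv (deriv (solenoidalProfile G)) t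
      = 4 * deriv G t + 5 * t * deriv (deriv G) t - (1 - t ^ 2) * deriv (deriv (deriv G)) t := by
  have hG₀ := (hG.differentiableAt three_ne_zero).hasDerivAt
  have hG₁ := hasDerivAt_deriv (hG.of_le (by norm_num))
  have hG₂ := hasDerivAt_deriv (hG.derivWithin (by norm_num))
  have hfirst : deriv (solenoidalProfile G) =ᶠ[𝓝 t]
      fun s => G s + 3 * s * deriv G s - (1 - s ^ 2) * deriv (deriv G) s := by
    filter_upwards [hG.eventually (by simp)] with s hs
    exact (hasDerivAt_solenoidalProfile (hs.of_le (by norm_num))).deriv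
  rw [hfirst.deriv_eq]
  refine (((hG₀.add (((hasDerivAt_id t).const_mul 3).mul hG₁)).sub
    ((hasDerivAt_one_sub_sq t).mul hG₂)).congr_deriv ?_).deriv
  simp only [id]
  ring

lemma deriv_deriv_riccatiProfile (hG : ContDiffAt ℝ 3 G t) :
    deriv (deriv (riccatiProfile G)) t
      = (1 - t ^ 2) ^ 2 * (deriv (deriv (deriv G)) t - deriv G t ^ 2 - G t * deriv (deriv G) t)
        - 8 * t * (1 - t ^ 2) * (deriv (deriv G) t - G t * deriv G t)
        + (12 * t ^ 2 - 4) * (deriv G t - G t ^ 2 / 2) := by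
  have hG₀ := (hG.differentiableAt three_ne_zero).hasDerivAt
  have hG₁ := hasDerivAt_deriv (hG.of_le (by norm_num))
  have hG₂ := hasDerivAt_deriv (hG.derivWithin (by norm_num))
  have hfirst : deriv (riccatiProfile G) =ᶠ[𝓝 t]
      fun s => (1 - s ^ 2) ^ 2 * (deriv (deriv G) s - G s * deriv G s)
        - 4 * s * (1 - s ^ 2) * (deriv G s - G s ^ 2 / 2) := by
    filter_upwards [hG.eventually (by simp)] with s hs
    exact (hasDerivAt_riccatiProfile (hs.of_le (by norm_num))).deriv
  rw [hfirst.deriv_eq]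
  refine (((((hasDerivAt_one_sub_sq t).pow 2).mul (hG₂.sub (hG₀.mul hG₁))).sub
    ((((hasDerivAt_id t).const_mul 4).mul (hasDerivAt_one_sub_sq t)).mul
      (hG₁.sub ((hG₀.pow 2).div_const 2)))).congr_deriv ?_).deriv
  simp only [id, Pi.mul_apply, Pi.pow_apply, Pi.sub_apply]
  push_cast
  ring

/-- The remaining `e_r` part of the momentum balance is the Slezkin–Landau equation. -/
theorem nsEq_of_deriv_deriv_riccatiProfile {C : ℝ} (hx : x ≠ 0) (ht : cosPolar x = t)
    (hG : ContDiffAt ℝ 3 G t) (hK : deriv (deriv (riccatiProfile G)) t = 2 * C) :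
    NSEq (axialField (-1) (solenoidalProfile G) G) (conical (-2) (pressureProfile C G)) x := by
  have hG₂ : ContDiffAt ℝ 2 G t := hG.of_le (by norm_num)
  have hF : ContDiffAt ℝ 2 (solenoidalProfile G) t :=
    (contDiffAt_id.mul hG₂).sub
      (contDiffAt_id.pow 2 |> contDiffAt_const.sub |>.mul (hG.derivWithin (by norm_num)))
  have hF' := (hasDerivAt_solenoidalProfile hG₂).deriv
  have hP' := hasDerivAt_pressureProfile C hG₂
  refine nsEq_axialField hx ht hF hG₂ hP'.differentiableAt ?_ ?_ ?_
  · rw [solenoidalProfile]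
    ring
  · rw [deriv_deriv_riccatiProfile hG] at hK
    rw [deriv_deriv_solenoidalProfile hG, hF', hP'.deriv, pressureProfile, solenoidalProfile]
    linear_combination -hK
  · rw [hF', hP'.deriv]
    ring

end ProfileEquations

section LiouvilleProfile

variable {α A t : ℝ}

/-- `A cot ^ (2 α) (θ / 2)` as a function of `t = cos θ`. -/
def cotPower (α A t : ℝ) : ℝ := A * ((1 + t) / (1 - t)) ^ α

/-- The Cayley transform of `cotPower`, equal to `tanh (α artanh t + log A / 2)`. -/
def tanhProfile (α A t : ℝ) : ℝ := (cotPower α A t - 1) / (cotPower α A t + 1)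

/-- The axial profile `G = -U_θ / sin θ` of the explicit solution, as a function of `t = cos θ`. -/
def liouvilleProfile (α A t : ℝ) : ℝ := 2 * (t - α * tanhProfile α A t) / (1 - t ^ 2)

lemma one_sub_sq_pos (ht : t ∈ Set.Ioo (-1) 1) : 0 < 1 - t ^ 2 := by
  nlinarith [ht.1, ht.2]

lemma cotPower_pos (α : ℝ) (hA : 0 < A) (ht : t ∈ Set.Ioo (-1) 1) : 0 < cotPower α A t :=
  mul_pos hA <| Real.rpow_pos_of_pos
    (div_pos (by linarith [ht.1]) (sub_pos.mpr ht.2)) α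

lemma contDiffAt_cotPower {n : WithTop ℕ∞} (α A : ℝ) (ht : t ∈ Set.Ioo (-1) 1) :
    ContDiffAt ℝ n (cotPower α A) t := by
  have hden : 1 - t ≠ 0 := (sub_pos.mpr ht.2).ne'
  have hratio : (1 + t) / (1 - t) ≠ 0 := div_ne_zero (by linarith [ht.1]) hden
  exact contDiffAt_const.mul (((contDiffAt_const.add contDiffAt_id).div
    (contDiffAt_const.sub contDiffAt_id) hden).rpow_const_of_ne hratio)

lemma hasDerivAt_cotPower (α A : ℝ) (ht : t ∈ Set.Ioo (-1) 1) :
    HasDerivAt (cotPower α A) (2 * α * cotPower α A t / (1 - t ^ 2)) t := by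
  have hnum : 1 + t ≠ 0 := by linarith [ht.1]
  have hden : 1 - t ≠ 0 := (sub_pos.mpr ht.2).ne'
  have hratio : (1 + t) / (1 - t) ≠ 0 := div_ne_zero hnum hden
  have hbase : HasDerivAt (fun s : ℝ => (1 + s) / (1 - s)) (2 / (1 - t) ^ 2) t := by
    refine (((hasDerivAt_id t).const_add 1).div ((hasDerivAt_id t).const_sub 1) hden).congr_deriv ?_
    simp only [id]
    ring
  refine ((hbase.rpow_const (p := α) (.inl hratio)).const_mul A).congr_deriv ?_
  rw [cotPower, Real.rpow_sub_one hratio, show 1 - t ^ 2 = (1 + t) * (1 - t) by ring]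
  field_simp

lemma hasDerivAt_tanhProfile (α : ℝ) (hA : 0 < A) (ht : t ∈ Set.Ioo (-1) 1) :
    HasDerivAt (tanhProfile α A) (α * (1 - tanhProfile α A t ^ 2) / (1 - t ^ 2)) t := by
  have hq := hasDerivAt_cotPower α A ht
  have hden : cotPower α A t + 1 ≠ 0 := by linarith [cotPower_pos α hA ht]
  refine ((hq.sub_const 1).div (hq.add_const 1) hden).congr_deriv ?_
  rw [tanhProfile]
  field_simp
  ring

lemma contDiffAt_liouvilleProfile {n : WithTop ℕ∞} (α : ℝ) (hA : 0 < A)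
    (ht : t ∈ Set.Ioo (-1) 1) : ContDiffAt ℝ n (liouvilleProfile α A) t := by
  have hq : ContDiffAt ℝ n (cotPower α A) t := contDiffAt_cotPower α A ht
  have hT : ContDiffAt ℝ n (tanhProfile α A) t :=
    (hq.sub contDiffAt_const).div (hq.add contDiffAt_const) (by linarith [cotPower_pos α hA ht])
  exact (contDiffAt_const.mul (contDiffAt_id.sub (contDiffAt_const.mul hT))).div
    (contDiffAt_const.sub (contDiffAt_id.pow 2)) (one_sub_sq_pos ht).ne'

lemma one_sub_sq_mul_liouvilleProfile (α A : ℝ) (ht : t ∈ Set.Ioo (-1) 1) :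
    (1 - t ^ 2) * liouvilleProfile α A t = 2 * (t - α * tanhProfile α A t) :=
  mul_div_cancel₀ _ (one_sub_sq_pos ht).ne'

lemma one_sub_sq_mul_deriv_liouvilleProfile (α : ℝ) (hA : 0 < A) (ht : t ∈ Set.Ioo (-1) 1) :
    (1 - t ^ 2) * deriv (liouvilleProfile α A) t
      = 2 * t * liouvilleProfile α A t + 2
        - 2 * α ^ 2 * (1 - tanhProfile α A t ^ 2) / (1 - t ^ 2) := by
  have hsq : 1 - t ^ 2 ≠ 0 := (one_sub_sq_pos ht).ne'
  have hG : HasDerivAt (liouvilleProfile α A) _ t :=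
    (((hasDerivAt_id t).sub ((hasDerivAt_tanhProfile α hA ht).const_mul α)).const_mul 2).div
      (hasDerivAt_one_sub_sq t) hsq
  rw [hG.deriv, liouvilleProfile]
  simp only [id, Pi.sub_apply]
  field_simp
  ring

lemma solenoidalProfile_liouvilleProfile (α : ℝ) (hA : 0 < A) (ht : t ∈ Set.Ioo (-1) 1) :
    solenoidalProfile (liouvilleProfile α A) t
      = -2 + 2 * α ^ 2 * (1 - tanhProfile α A t ^ 2) / (1 - t ^ 2)
        - t * liouvilleProfile α A t := by
  rw [solenoidalProfile, one_sub_sq_mul_deriv_liouvilleProfile α hA ht]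
  ring

lemma riccatiProfile_liouvilleProfile (α : ℝ) (hA : 0 < A) (ht : t ∈ Set.Ioo (-1) 1) :
    riccatiProfile (liouvilleProfile α A) t = 2 * (1 - α ^ 2) := by
  have hsq : 1 - t ^ 2 ≠ 0 := (one_sub_sq_pos ht).ne'
  calc riccatiProfile (liouvilleProfile α A) t
      = (1 - t ^ 2) * ((1 - t ^ 2) * deriv (liouvilleProfile α A) t)
        - ((1 - t ^ 2) * liouvilleProfile α A t) ^ 2 / 2 := by
        rw [riccatiProfile]
        ring
    _ = 2 * t * ((1 - t ^ 2) * liouvilleProfile α A t) + 2 * (1 - t ^ 2)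
        - 2 * α ^ 2 * (1 - tanhProfile α A t ^ 2)
        - ((1 - t ^ 2) * liouvilleProfile α A t) ^ 2 / 2 := by
        rw [one_sub_sq_mul_deriv_liouvilleProfile α hA ht]
        field_simp
    _ = 2 * (1 - α ^ 2) := by
        rw [one_sub_sq_mul_liouvilleProfile α A ht]
        ring

lemma deriv_deriv_riccatiProfile_liouvilleProfile (α : ℝ) (hA : 0 < A)
    (ht : t ∈ Set.Ioo (-1) 1) :
    deriv (deriv (riccatiProfile (liouvilleProfile α A))) t = 0 := by
  have hconst : riccatiProfile (liouvilleProfile α A) =ᶠ[𝓝 t] fun _ => 2 * (1 - α ^ 2) := by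
    filter_upwards [Ioo_mem_nhds ht.1 ht.2] with s hs
    exact riccatiProfile_liouvilleProfile α hA hs
  rw [hconst.deriv.deriv_eq]
  simp

end LiouvilleProfile

section ExplicitSolution

variable {A : ℝ} {x : V3}

lemma ne_zero_of_rho_ne_zero (hx : rho x ≠ 0) : x ≠ 0 := by
  rintro rfl
  simp [rho] at hx

lemma rho_sq_eq_norm_sq_mul (hx : x ≠ 0) : rho x ^ 2 = ‖x‖ ^ 2 * (1 - cosPolar x ^ 2) := by
  linear_combination (‖x‖ * cosPolar x + x 2) * norm_mul_cosPolar hx - norm_sq_eq_rho_sq_add x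

lemma cosPolar_mem_Ioo (hx : rho x ≠ 0) : cosPolar x ∈ Set.Ioo (-1) 1 := by
  have hx₀ := ne_zero_of_rho_ne_zero hx
  have hpos : 0 < ‖x‖ ^ 2 * (1 - cosPolar x ^ 2) := rho_sq_eq_norm_sq_mul hx₀ ▸ by positivity
  have hsin : 0 < 1 - cosPolar x ^ 2 := pos_of_mul_pos_right hpos (sq_nonneg _)
  exact abs_lt.mp ((sq_lt_one_iff_abs_lt_one _).mp (sub_pos.mp hsin))

lemma mul_cot2a (α A : ℝ) (hx : rho x ≠ 0) :
    A * cot2a α x = cotPower α A (cosPolar x) := by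
  have hx₀ := ne_zero_of_rho_ne_zero hx
  obtain ⟨hlo, hhi⟩ := cosPolar_mem_Ioo hx
  have hr : 0 < ‖x‖ := norm_pos_iff.mpr hx₀
  have hbase : ‖x‖ + x 2 = ‖x‖ * (1 + cosPolar x) := by
    rw [← norm_mul_cosPolar hx₀]
    ring
  have hnonneg : 0 ≤ (‖x‖ + x 2) / rho x := by
    rw [hbase]
    exact div_nonneg (mul_nonneg hr.le (by linarith)) (Real.sqrt_nonneg _)
  have hnum : 1 + cosPolar x ≠ 0 := by linarith
  have hden : 1 - cosPolar x ≠ 0 := by linarith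
  rw [cot2a, cotPower, Real.rpow_mul hnonneg, Real.rpow_two, div_pow, hbase,
    rho_sq_eq_norm_sq_mul hx₀,
    show 1 - cosPolar x ^ 2 = (1 + cosPolar x) * (1 - cosPolar x) by ring]
  congr 2
  field_simp

lemma Utheta17_eq (α A : ℝ) (hx : rho x ≠ 0) :
    Utheta17 α A x = -(rho x / ‖x‖) * liouvilleProfile α A (cosPolar x) := by
  have hx₀ := ne_zero_of_rho_ne_zero hx
  have hr : ‖x‖ ≠ 0 := norm_ne_zero_iff.mpr hx₀
  have hprofile := one_sub_sq_mul_liouvilleProfile α A (cosPolar_mem_Ioo hx)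
  rw [Utheta17, mul_cot2a α A hx, mul_div_assoc α, ← tanhProfile, ← cosPolar]
  field_simp
  linear_combination ‖x‖ ^ 2 * hprofile
    + liouvilleProfile α A (cosPolar x) * rho_sq_eq_norm_sq_mul hx₀

lemma Ur17_eq (α : ℝ) (hA : 0 < A) (hx : rho x ≠ 0) :
    Ur17 α A x = solenoidalProfile (liouvilleProfile α A) (cosPolar x)
      + cosPolar x * liouvilleProfile α A (cosPolar x) := by
  have hx₀ := ne_zero_of_rho_ne_zero hx
  have hr : ‖x‖ ≠ 0 := norm_ne_zero_iff.mpr hx₀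
  have hc := cosPolar_mem_Ioo hx
  have hsq : 1 - cosPolar x ^ 2 ≠ 0 := (one_sub_sq_pos hc).ne'
  have hq : 1 + cotPower α A (cosPolar x) ≠ 0 := by linarith [cotPower_pos α hA hc]
  have hq' : cotPower α A (cosPolar x) + 1 ≠ 0 := by linarith [cotPower_pos α hA hc]
  rw [Ur17, mul_cot2a α A hx, rho_sq_eq_norm_sq_mul hx₀, solenoidalProfile_liouvilleProfile α hA hc,
    tanhProfile]
  field_simp
  ring

lemma eThv_eq (hx : rho x ≠ 0) :
    eThv x = (‖x‖ / rho x) • (cosPolar x • eRv x - e3 2) := by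
  have hx₀ := ne_zero_of_rho_ne_zero hx
  have hr : ‖x‖ ≠ 0 := norm_ne_zero_iff.mpr hx₀
  have hlast : -rho x / ‖x‖ = ‖x‖ / rho x * (x 2 / ‖x‖ * (‖x‖⁻¹ * x 2) - 1) := by
    field_simp
    linear_combination norm_sq_eq_rho_sq_add x
  have hhor (a : ℝ) : x 2 * a / (‖x‖ * rho x) = ‖x‖ / rho x * (x 2 / ‖x‖ * (‖x‖⁻¹ * a)) := by
    field_simp
  ext i
  fin_cases i
  · simpa [eThv, eRv, e3_apply, cosPolar] using hhor (x 0)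
  · simpa [eThv, eRv, e3_apply, cosPolar] using hhor (x 1)
  · simpa [eThv, eRv, e3_apply, cosPolar] using hlast

lemma u17_eq_axialField (α : ℝ) (hA : 0 < A) (hx : rho x ≠ 0) :
    u17 α A x
      = axialField (-1) (solenoidalProfile (liouvilleProfile α A)) (liouvilleProfile α A) x := by
  have hr : ‖x‖ ≠ 0 := norm_ne_zero_iff.mpr (ne_zero_of_rho_ne_zero hx)
  rw [u17, Utheta17_eq α A hx, Ur17_eq α hA hx, eThv_eq hx, eRv, axialField, conical, conical,
    show (-1 - 1 : ℤ) = -2 from rfl, zpow_neg, zpow_neg, zpow_ofNat, zpow_one]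
  match_scalars
  · field_simp
    ring
  · field_simp

lemma p17_eq_conical (α : ℝ) (hA : 0 < A) (hx : rho x ≠ 0) :
    p17 α A x = conical (-2) (pressureProfile 0 (liouvilleProfile α A)) x := by
  have hx₀ := ne_zero_of_rho_ne_zero hx
  have hr : ‖x‖ ≠ 0 := norm_ne_zero_iff.mpr hx₀
  rw [p17, Utheta17_eq α A hx, Ur17_eq α hA hx, conical, pressureProfile, mul_pow, neg_sq, div_pow,
    rho_sq_eq_norm_sq_mul hx₀]
  field_simp
  ring

lemma eventually_rho_ne_zero (hx : rho x ≠ 0) : ∀ᶠ y in 𝓝 x, rho y ≠ 0 := by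
  have hcont : Continuous rho := by
    unfold rho
    fun_prop
  exact hcont.continuousAt.eventually_ne hx

lemma rho_smul (c : ℝ) (x : V3) : rho (c • x) = |c| * rho x := by
  rw [rho, rho, ← Real.sqrt_sq_eq_abs, ← Real.sqrt_mul (sq_nonneg c)]
  simp only [PiLp.smul_apply, smul_eq_mul]
  ring_nf

lemma rho_smul_ne_zero {c : ℝ} (hc : c ≠ 0) (hx : rho x ≠ 0) : rho (c • x) ≠ 0 := by
  rw [rho_smul]
  exact mul_ne_zero (abs_ne_zero.mpr hc) hx

lemma nsEq_u17_p17 (α : ℝ) (hA : 0 < A) (hx : rho x ≠ 0) : NSEq (u17 α A) (p17 α A) x := by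
  have hc := cosPolar_mem_Ioo hx
  refine NSEq.congr (nsEq_of_deriv_deriv_riccatiProfile (C := 0) (ne_zero_of_rho_ne_zero hx) rfl
    (contDiffAt_liouvilleProfile α hA hc) ?_) ?_ ?_
  · rw [deriv_deriv_riccatiProfile_liouvilleProfile α hA hc, mul_zero]
  · exact (eventually_rho_ne_zero hx).mono fun y hy => u17_eq_axialField α hA hy
  · exact (eventually_rho_ne_zero hx).mono fun y hy => p17_eq_conical α hA hy

lemma u17_smul (α : ℝ) (hA : 0 < A) (hx : rho x ≠ 0) {c : ℝ} (hc : 0 < c) :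
    u17 α A (c • x) = c⁻¹ • u17 α A x := by
  rw [u17_eq_axialField α hA hx, u17_eq_axialField α hA (rho_smul_ne_zero hc.ne' hx),
    axialField_smul _ _ _ hc, zpow_neg_one]

lemma p17_smul (α : ℝ) (hA : 0 < A) (hx : rho x ≠ 0) {c : ℝ} (hc : 0 < c) :
    p17 α A (c • x) = (c ^ 2)⁻¹ * p17 α A x := by
  rw [p17_eq_conical α hA hx, p17_eq_conical α hA (rho_smul_ne_zero hc.ne' hx),
    conical_smul _ _ hc, zpow_neg, zpow_ofNat]

end ExplicitSolution

/-- the explicit pair `(u17, p17)` is a `(-1)`-homogeneous axisymmetric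
no-swirl solution of Navier–Stokes off the `x₃`-axis. -/
theorem explicit_liouville_solution (α A : ℝ) (hα : α ≠ 0) (hA : 0 < A) :
    (∀ x : V3, rho x ≠ 0 → NSEq (u17 α A) (p17 α A) x) ∧
    (∀ x : V3, rho x ≠ 0 → ∀ lam : ℝ, 0 < lam →
      u17 α A (lam • x) = lam⁻¹ • u17 α A x ∧ p17 α A (lam • x) = (lam ^ 2)⁻¹ * p17 α A x) ∧
    AxisymOn (u17 α A) {x : V3 | rho x ≠ 0} ∧
    (∀ x : V3, rho x ≠ 0 → uPc (u17 α A) x = 0) := by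
  refine ⟨fun x hx => nsEq_u17_p17 α hA hx, fun x hx lam hlam => ?_, ?_, fun x hx => ?_⟩
  · exact ⟨u17_smul α hA hx hlam, p17_smul α hA hx hlam⟩
  · exact (axisymOn_axialField _ _ _ _).congr fun x hx => u17_eq_axialField α hA hx
  · simpa only [uPc, u17_eq_axialField α hA hx] using uPc_axialField _ _ _ x
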